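/- Suppose the n-weak injective dimension of R as a left module over itself is at most k. Then a right R-module M is (n,k)-weak cotorsion if and only if M is the kernel of some WF^n_k(R^op)-precover φ : E → D with E injective. -/

import Mathlib

/-!
Common definitions for formalizing "(n,k)-weak cotorsion modules" over an arbitrary
(not necessarily commutative) ring `R`.  Left `R`-modules are objects of
`ModuleCat R`, right `R`-modules are objects of `ModuleCat Rᵐᵒᵖ`.

Since Mathlib does not provide `Tor` of a right module with a left module over a
noncommutative ring, we encode the vanishing of `Tor_i^R(N, M)` (for `N` a right
module and `M` a left module) by the equivalent condition
`Ext^i_{Rᵐᵒᵖ}(N, M⋆) = 0`, where `M⋆ = Hom_ℤ(M, ℚ/ℤ)` is the character module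
(a right module).  This is equivalent because `ℚ/ℤ` is an injective cogenerator:
`Ext^i_{Rᵐᵒᵖ}(N, M⋆) ≅ (Tor_i^R(N, M))⋆`, and an abelian group vanishes iff its
character group does.
-/

open CategoryTheory

universe u

noncomputable section

/-- The character group `Hom_ℤ(N, ℚ/ℤ)`. -/
def CharGroup (N : Type u) [AddCommGroup N] : Type u := N →+ AddCircle (1 : ℚ)

instance (N : Type u) [AddCommGroup N] : AddCommGroup (CharGroup N) :=
  inferInstanceAs (AddCommGroup (N →+ AddCircle (1 : ℚ)))

namespace CharGroup

variable {N : Type u} [AddCommGroup N]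

/-- View an element of the character group as an additive monoid hom. -/
def toHom (f : CharGroup N) : N →+ AddCircle (1 : ℚ) := f

/-- Build an element of the character group from an additive monoid hom. -/
def ofHom (f : N →+ AddCircle (1 : ℚ)) : CharGroup N := f

theorem hom_ext {f g : CharGroup N} (h : ∀ m, toHom f m = toHom g m) : f = g :=
  AddMonoidHom.ext h

end CharGroup

open CharGroup in
/-- Left module structure on the character group of a right module. -/
instance charGroupModuleLeft (R : Type u) [Ring R] (N : Type u) [AddCommGroup N]
    [Module Rᵐᵒᵖ N] : Module R (CharGroup N) where
  smul r f := ofHom ((toHom f).comp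
    (AddMonoidHom.mk' (fun m => MulOpposite.op r • m) (fun a b => smul_add _ a b)))
  one_smul f := hom_ext fun m => by
    show toHom f (MulOpposite.op (1 : R) • m) = toHom f m
    rw [MulOpposite.op_one, one_smul]
  mul_smul r s f := hom_ext fun m => by
    show toHom f (MulOpposite.op (r * s) • m)
      = toHom f (MulOpposite.op s • MulOpposite.op r • m)
    rw [MulOpposite.op_mul, mul_smul]
  smul_zero r := CharGroup.hom_ext fun m => rfl
  smul_add r f g := CharGroup.hom_ext fun m => rfl
  add_smul r s f := hom_ext fun m => by
    show toHom f (MulOpposite.op (r + s) • m)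
      = toHom f (MulOpposite.op r • m) + toHom f (MulOpposite.op s • m)
    rw [MulOpposite.op_add, add_smul, map_add]
  zero_smul f := hom_ext fun m => by
    show toHom f (MulOpposite.op (0 : R) • m) = 0
    rw [MulOpposite.op_zero, zero_smul, map_zero]

open CharGroup in
/-- Right module structure on the character group of a left module. -/
instance charGroupModuleRight (R : Type u) [Ring R] (N : Type u) [AddCommGroup N]
    [Module R N] : Module Rᵐᵒᵖ (CharGroup N) where
  smul r f := ofHom ((toHom f).comp
    (AddMonoidHom.mk' (fun m => r.unop • m) (fun a b => smul_add _ a b)))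
  one_smul f := hom_ext fun m => by
    show toHom f ((1 : Rᵐᵒᵖ).unop • m) = toHom f m
    rw [MulOpposite.unop_one, one_smul]
  mul_smul r s f := hom_ext fun m => by
    show toHom f ((r * s).unop • m) = toHom f (s.unop • r.unop • m)
    rw [MulOpposite.unop_mul, mul_smul]
  smul_zero r := CharGroup.hom_ext fun m => rfl
  smul_add r f g := CharGroup.hom_ext fun m => rfl
  add_smul r s f := hom_ext fun m => by
    show toHom f ((r + s).unop • m) = toHom f (r.unop • m) + toHom f (s.unop • m)
    rw [MulOpposite.unop_add, add_smul, map_add]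
  zero_smul f := hom_ext fun m => by
    show toHom f ((0 : Rᵐᵒᵖ).unop • m) = 0
    rw [MulOpposite.unop_zero, zero_smul, map_zero]

variable (R : Type u) [Ring R]

/-- `extVanish S i A B` says that `Ext^i_S(A, B) = 0`. -/
def extVanish (S : Type u) [Ring S] (i : ℕ) (A B : ModuleCat.{u} S) : Prop :=
  Subsingleton (((Ext ℤ (ModuleCat.{u} S) i).obj (Opposite.op A)).obj B)

/-- The character module of a right `R`-module, as a left `R`-module. -/
def charLeft (N : ModuleCat.{u} Rᵐᵒᵖ) : ModuleCat.{u} R :=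
  ModuleCat.of R (CharGroup N)

/-- The character module of a left `R`-module, as a right `R`-module. -/
def charRight (M : ModuleCat.{u} R) : ModuleCat.{u} Rᵐᵒᵖ :=
  ModuleCat.of Rᵐᵒᵖ (CharGroup M)

/-- `torVanish R i N M` encodes `Tor_i^R(N, M) = 0` for a right module `N` and a
left module `M`, via the character module duality
`Ext^i_R(M, N⋆) ≅ (Tor_i^R(N, M))⋆`. -/
def torVanish (i : ℕ) (N : ModuleCat.{u} Rᵐᵒᵖ) (M : ModuleCat.{u} R) : Prop :=
  extVanish R i M (charLeft R N)

/-- `K` is a special super finitely presented `S`-module (for the parameter `n`):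
`K` is the image of `F_n → F_{n-1}` in a projective resolution
`⋯ → F_{n+1} → F_n → ⋯ → F_0 → U → 0` of some module `U` in which `F_i` is finitely
generated projective for all `i ≥ n`.  (For `n = 0` the distinguished module is `U`
itself, matching `Ext^{n+1}(U, -) ≅ Ext^1(K_{n-1}, -)`.) -/
def IsSpecialSFP (S : Type u) [Ring S] (n : ℕ) (K : ModuleCat.{u} S) : Prop :=
  ∃ (U : ModuleCat.{u} S) (F : ℕ → ModuleCat.{u} S)
    (d : ∀ i, F (i + 1) →ₗ[S] F i) (π : F 0 →ₗ[S] U),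
      (∀ i, Module.Projective S (F i)) ∧
      (∀ i, n ≤ i → Module.Finite S (F i)) ∧
      Function.Surjective π ∧ Function.Exact (d 0) π ∧
      (∀ i, Function.Exact (d (i + 1)) (d i)) ∧
      (if n = 0 then Nonempty ((K : Type u) ≃ₗ[S] U)
       else Nonempty ((K : Type u) ≃ₗ[S] LinearMap.range (d (n - 1))))

/-- The `n`-weak injective dimension of a left `S`-module `M` is at most `k`. -/
def nwidLE (S : Type u) [Ring S] (n k : ℕ) (M : ModuleCat.{u} S) : Prop :=
  ∀ K : ModuleCat.{u} S, IsSpecialSFP S n K → extVanish S (k + 1) K M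

/-- The `n`-weak flat dimension of a right `R`-module `N` is at most `k`:
`Tor_{k+1}^R(N, K) = 0` for every special super finitely presented left module `K`. -/
def nwfdLE (n k : ℕ) (N : ModuleCat.{u} Rᵐᵒᵖ) : Prop :=
  ∀ K : ModuleCat.{u} R, IsSpecialSFP R n K → torVanish R (k + 1) N K

/-- A right `R`-module `M` is `(n,k)`-weak cotorsion if `Ext^1(N, M) = 0` for every
right module `N` of `n`-weak flat dimension at most `k`. -/
def IsNKWeakCotorsion (n k : ℕ) (M : ModuleCat.{u} Rᵐᵒᵖ) : Prop :=
  ∀ N : ModuleCat.{u} Rᵐᵒᵖ, nwfdLE R n k N → extVanish Rᵐᵒᵖ 1 N M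

/-- Projective dimension at most `k`, via Ext vanishing. -/
def pdLE (S : Type u) [Ring S] (k : ℕ) (K : ModuleCat.{u} S) : Prop :=
  ∀ M : ModuleCat.{u} S, extVanish S (k + 1) K M

/-- Injective dimension at most `k`, via Ext vanishing. -/
def idLE (S : Type u) [Ring S] (k : ℕ) (M : ModuleCat.{u} S) : Prop :=
  ∀ N : ModuleCat.{u} S, extVanish S (k + 1) N M

/-- Flat dimension of a right module at most `k`, via Tor vanishing. -/
def fdLE (k : ℕ) (N : ModuleCat.{u} Rᵐᵒᵖ) : Prop :=
  ∀ A : ModuleCat.{u} R, torVanish R (k + 1) N A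

/-- `l.n.sp.gldim(R) ≤ k` : every special super finitely presented left module has
projective dimension at most `k`. -/
def lnspGldimLE (n k : ℕ) : Prop :=
  ∀ K : ModuleCat.{u} R, IsSpecialSFP R n K → pdLE R k K

/-- `w.gl.dim(R) ≤ k`. -/
def wGldimLE (k : ℕ) : Prop :=
  ∀ N : ModuleCat.{u} Rᵐᵒᵖ, fdLE R k N

/-- A right `R`-module `M` is `k`-cotorsion if `Ext^1(F, M) = 0` for every right
module `F` of flat dimension at most `k`. -/
def IsKCotorsion (k : ℕ) (M : ModuleCat.{u} Rᵐᵒᵖ) : Prop :=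
  ∀ F : ModuleCat.{u} Rᵐᵒᵖ, fdLE R k F → extVanish Rᵐᵒᵖ 1 F M

/-- `φ : E → D` is a `𝒞`-precover of `D`. -/
def IsPrecover (S : Type u) [Ring S] (𝒞 : ModuleCat.{u} S → Prop)
    (E D : ModuleCat.{u} S) (φ : E →ₗ[S] D) : Prop :=
  𝒞 E ∧ ∀ F : ModuleCat.{u} S, 𝒞 F → ∀ g : F →ₗ[S] D, ∃ h : F →ₗ[S] E, φ ∘ₗ h = g

/-- `φ : E → D` is a `𝒞`-cover of `D`. -/
def IsCover (S : Type u) [Ring S] (𝒞 : ModuleCat.{u} S → Prop)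
    (E D : ModuleCat.{u} S) (φ : E →ₗ[S] D) : Prop :=
  IsPrecover S 𝒞 E D φ ∧ ∀ g : E →ₗ[S] E, φ ∘ₗ g = φ → Function.Bijective g

/-- `f : X → F` is a `𝒞`-preenvelope of `X`. -/
def IsPreenvelope (S : Type u) [Ring S] (𝒞 : ModuleCat.{u} S → Prop)
    (X F : ModuleCat.{u} S) (f : X →ₗ[S] F) : Prop :=
  𝒞 F ∧ ∀ F' : ModuleCat.{u} S, 𝒞 F' → ∀ g : X →ₗ[S] F', ∃ h : F →ₗ[S] F', h ∘ₗ f = g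

/-- A module is reduced if it has no nonzero injective submodules. -/
def IsReducedModule (S : Type u) [Ring S] (M : ModuleCat.{u} S) : Prop :=
  ∀ N : Submodule S M, Module.Injective S N → N = ⊥

/-- `D` is an `m`-th cosyzygy of `M`: there is an exact sequence
`0 → M → E^0 → ⋯ → E^{m-1} → D → 0` with each `E^i` injective. -/
def IsCosyzygy (S : Type u) [Ring S] : ℕ → ModuleCat.{u} S → ModuleCat.{u} S → Prop
  | 0, M, D => Nonempty ((M : Type u) ≃ₗ[S] D)
  | m + 1, M, D => ∃ (C E : ModuleCat.{u} S), IsCosyzygy S m M C ∧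
      Module.Injective S E ∧
      ∃ (ι : C →ₗ[S] E) (p : E →ₗ[S] D),
        Function.Injective ι ∧ Function.Surjective p ∧ Function.Exact ι p


/-- A left `R`-module `F` is flat: `Tor_1(A, F) = 0` for every right module `A`
(encoded via character duality, as above). -/
def IsFlatModule (R : Type u) [Ring R] (F : ModuleCat.{u} R) : Prop :=
  ∀ A : ModuleCat.{u} Rᵐᵒᵖ, torVanish R 1 A F

end

section Helpers
open Limits

theorem extVanish_iff {S : Type u} [Ring S] {K : ModuleCat.{u} S} (P : ProjectiveResolution K)
    (i : ℕ) (Y : ModuleCat.{u} S) :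
    extVanish S (i + 1) K Y ↔ ∀ f : P.complex.X (i + 1) ⟶ Y,
      P.complex.d (i + 2) (i + 1) ≫ f = 0 → ∃ g : P.complex.X i ⟶ Y,
        P.complex.d (i + 1) i ≫ g = f := by
  unfold extVanish
  rw [← ModuleCat.isZero_iff_subsingleton, (P.isoExt (R := ℤ) (i + 1) Y).isZero_iff,
    ← HomologicalComplex.exactAt_iff_isZero_homology,
    HomologicalComplex.exactAt_iff' _ i (i + 1) (i + 2) (by simp) (by simp),
    ShortComplex.moduleCat_exact_iff]
  exact Iff.rfl

theorem exists_resolution {S : Type u} [Ring S] (K : ModuleCat.{u} S)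
    (F : ℕ → ModuleCat.{u} S) (d : ∀ i, F (i + 1) ⟶ F i) (p : F 0 ⟶ K)
    (hF : ∀ i, Projective (F i)) [Epi p] (h0 : d 0 ≫ p = 0)
    (he0 : (ShortComplex.mk _ _ h0).Exact)
    (h1 : ∀ i, d (i + 1) ≫ d i = 0)
    (he : ∀ i, (ShortComplex.mk _ _ (h1 i)).Exact) :
    ∃ P : ProjectiveResolution K, P.complex = ChainComplex.of F d h1 := by
  have hd0 : ChainComplex.of.d F d 1 0 = d 0 := ChainComplex.of_d F d 0
  refine ⟨{ complex := ChainComplex.of F d h1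
            projective := hF
            π := (ChainComplex.toSingle₀Equiv _ _).symm ⟨p, by
              exact (congrArg (· ≫ p) hd0).trans h0⟩
            quasiIso := ⟨fun n => ?_⟩ }, rfl⟩
  cases n with
  | zero =>
    rw [ChainComplex.quasiIsoAt₀_iff, ShortComplex.quasiIso_iff_of_zeros']
    · refine (ShortComplex.exact_and_epi_g_iff_of_iso ?_).2 ⟨he0, ‹Epi p›⟩
      refine ShortComplex.isoMk (Iso.refl _) (Iso.refl _) (Iso.refl _) ?_ ?_
      · exact (Category.id_comp _).trans (hd0.symm.trans (Category.comp_id _).symm)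
      · refine (Category.id_comp _).trans (Eq.trans ?_ (Category.comp_id _).symm)
        exact (ChainComplex.toSingle₀Equiv_symm_apply_f_zero
          (C := ChainComplex.of F d h1) (X := K) p _).symm
    all_goals rfl
  | succ n =>
    rw [quasiIsoAt_iff_exactAt']
    · rw [HomologicalComplex.exactAt_iff' _ (n + 1 + 1) (n + 1) n (by simp) (by simp)]
      have := he n
      simpa [HomologicalComplex.sc', HomologicalComplex.shortComplexFunctor'] using this
    · apply ChainComplex.exactAt_succ_single_obj

theorem extVanish_iff' {S : Type u} [Ring S] (K : ModuleCat.{u} S)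
    (F : ℕ → ModuleCat.{u} S) (d : ∀ i, F (i + 1) →ₗ[S] F i) (p : F 0 →ₗ[S] K)
    (hF : ∀ i, Module.Projective S (F i)) (hp : Function.Surjective p)
    (he0 : Function.Exact (d 0) p)
    (he : ∀ i, Function.Exact (d (i + 1)) (d i)) (i : ℕ) (Y : ModuleCat.{u} S) :
    extVanish S (i + 1) K Y ↔ ∀ f : F (i + 1) →ₗ[S] Y,
      f ∘ₗ d (i + 1) = 0 → ∃ g : F i →ₗ[S] Y, g ∘ₗ d i = f := by
  have : Epi (ModuleCat.ofHom p) := (ModuleCat.epi_iff_surjective _).2 hp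
  have h0 : ModuleCat.ofHom (d 0) ≫ ModuleCat.ofHom p = 0 :=
    ModuleCat.hom_ext (LinearMap.ext fun x => he0.apply_apply_eq_zero x)
  have h1 : ∀ i, ModuleCat.ofHom (d (i+1)) ≫ ModuleCat.ofHom (d i) = 0 := fun i =>
    ModuleCat.hom_ext (LinearMap.ext fun x => (he i).apply_apply_eq_zero x)
  obtain ⟨P, hP⟩ := exists_resolution K F (fun i => ModuleCat.ofHom (d i)) (ModuleCat.ofHom p)
    (fun i => by
      exact (IsProjective.iff_projective _).1 (hF i)) h0
    (by rw [ShortComplex.moduleCat_exact_iff]; exact fun x hx => (he0 x).1 hx) h1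
    (fun i => by rw [ShortComplex.moduleCat_exact_iff]; exact fun x hx => (he i x).1 hx)
  rw [extVanish_iff P, hP]
  have e1 : (ChainComplex.of F (fun i => ModuleCat.ofHom (d i)) h1).d (i + 2) (i + 1)
      = ModuleCat.ofHom (d (i + 1)) :=
    ChainComplex.of_d F (fun i => ModuleCat.ofHom (d i)) (i + 1)
  have e2 : (ChainComplex.of F (fun i => ModuleCat.ofHom (d i)) h1).d (i + 1) i
      = ModuleCat.ofHom (d i) :=
    ChainComplex.of_d F (fun i => ModuleCat.ofHom (d i)) i
  rw [e1, e2]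
  constructor
  · intro H f hf
    obtain ⟨g, hg⟩ := H (ModuleCat.ofHom f) (ModuleCat.hom_ext hf)
    exact ⟨g.hom, congrArg ModuleCat.Hom.hom hg⟩
  · intro H f hf
    obtain ⟨g, hg⟩ := H f.hom (congrArg ModuleCat.Hom.hom hf)
    exact ⟨ModuleCat.ofHom g, ModuleCat.hom_ext hg⟩

/-- module-level Ext^1 -/
theorem exists_pres {S : Type u} [Ring S] (N : ModuleCat.{u} S) :
    ∃ (P0 P1 P2 : ModuleCat.{u} S) (d1 : P1 →ₗ[S] P0) (d2 : P2 →ₗ[S] P1) (p : P0 →ₗ[S] N),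
      Module.Projective S P0 ∧ Function.Surjective p ∧ Function.Exact d1 p ∧
      Function.Exact d2 d1 ∧
      ∀ Y : ModuleCat.{u} S, extVanish S 1 N Y ↔ ∀ f : P1 →ₗ[S] Y,
      f ∘ₗ d2 = 0 → ∃ g : P0 →ₗ[S] Y, g ∘ₗ d1 = f := by
  let P := ProjectiveResolution.of N
  refine ⟨P.complex.X 0, P.complex.X 1, P.complex.X 2, (P.complex.d 1 0).hom,
    (P.complex.d 2 1).hom, (P.π.f 0).hom, ?_, ?_, ?_, ?_, ?_⟩
  · exact (IsProjective.iff_projective _).2 (P.projective 0)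
  · exact (ModuleCat.epi_iff_surjective (P.π.f 0)).1 inferInstance
  · exact (ShortComplex.ShortExact.moduleCat_exact_iff_function_exact _).1 P.exact₀
  · exact (ShortComplex.ShortExact.moduleCat_exact_iff_function_exact _).1 (P.exact_succ 0)
  · intro Y
    rw [← zero_add 1, extVanish_iff P 0 Y]
    constructor
    · intro H f hf
      obtain ⟨g, hg⟩ := H (ModuleCat.ofHom f) (ModuleCat.hom_ext hf)
      exact ⟨g.hom, congrArg ModuleCat.Hom.hom hg⟩
    · intro H f hf
      obtain ⟨g, hg⟩ := H f.hom (congrArg ModuleCat.Hom.hom hf)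
      exact ⟨ModuleCat.ofHom g, ModuleCat.hom_ext hg⟩

theorem inj_extend {S : Type u} [Ring S] {A B E : Type u} [AddCommGroup A] [AddCommGroup B]
    [AddCommGroup E] [Module S A] [Module S B] [Module S E] (hE : Module.Injective S E)
    (D : A →ₗ[S] B) (t : A →ₗ[S] E) (h : ∀ a, D a = 0 → t a = 0) :
    ∃ t' : B →ₗ[S] E, t' ∘ₗ D = t := by
  obtain ⟨t', ht'⟩ := hE.out ((LinearMap.ker D).liftQ D le_rfl)
    (by rw [← LinearMap.ker_eq_bot, Submodule.ker_liftQ_eq_bot _ _ _ le_rfl])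
    ((LinearMap.ker D).liftQ t (fun a ha => h a ha))
  exact ⟨t', LinearMap.ext fun a => ht' (Submodule.Quotient.mk a)⟩

theorem char_extend {A B : Type u} [AddCommGroup A] [AddCommGroup B]
    (D : A →ₗ[ℤ] B) (t : A →+ AddCircle (1 : ℚ)) (h : ∀ a, D a = 0 → t a = 0) :
    ∃ t' : B →+ AddCircle (1 : ℚ), ∀ a, t' (D a) = t a := by
  obtain ⟨t', ht'⟩ := CharacterModule.dual_surjective_of_injective
    ((LinearMap.ker D).liftQ D le_rfl)
    (by rw [← LinearMap.ker_eq_bot, Submodule.ker_liftQ_eq_bot _ _ _ le_rfl])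
    ((LinearMap.ker D).liftQ t.toIntLinearMap (fun a ha => h a ha)).toAddMonoidHom
  exact ⟨t', fun a => DFunLike.congr_fun ht' (Submodule.Quotient.mk a)⟩

theorem dual_basis (R : Type u) [Ring R] (P : Type u) [AddCommGroup P] [Module R P]
    [Module.Finite R P] [Module.Projective R P] :
    ∃ (n : ℕ) (b : Fin n → P) (c : Fin n → (P →ₗ[R] R)), ∀ x, ∑ i, c i x • b i = x := by
  obtain ⟨n, f, g, -, -, h⟩ := Module.Finite.exists_comp_eq_id_of_projective R P
  refine ⟨n, fun i => f (Pi.single i 1), fun i => LinearMap.proj i ∘ₗ g, fun x => ?_⟩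
  have : f (g x) = x := DFunLike.congr_fun h x
  conv_rhs => rw [← this, ← Finset.univ_sum_single (g x)]
  rw [map_sum]
  refine Finset.sum_congr rfl fun i _ => ?_
  rw [← map_smul]
  congr 1
  ext j
  simp [Pi.single_apply]

theorem key {R : Type u} [Ring R] {P2 P1 P0 : Type u} [AddCommGroup P2] [AddCommGroup P1]
    [AddCommGroup P0] [Module R P2] [Module R P1] [Module R P0]
    (d2 : P2 →ₗ[R] P1) (d1 : P1 →ₗ[R] P0)
    [Module.Finite R P1] [Module.Projective R P1] [Module.Finite R P2] [Module.Projective R P2]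
    (hR : ∀ a : P1 →ₗ[R] R, a ∘ₗ d2 = 0 → ∃ b : P0 →ₗ[R] R, b ∘ₗ d1 = a)
    (E : Type u) [AddCommGroup E] [Module Rᵐᵒᵖ E] (hE : Module.Injective Rᵐᵒᵖ E)
    (f : P1 →ₗ[R] CharGroup E) (hf : f ∘ₗ d2 = 0) :
    ∃ g : P0 →ₗ[R] CharGroup E, g ∘ₗ d1 = f := by
  obtain ⟨n, p, c, hpc⟩ := dual_basis R P1
  obtain ⟨m, q, e, hqe⟩ := dual_basis R P2
  -- transposes
  let D1 : (P0 →ₗ[R] R) →ₗ[Rᵐᵒᵖ] (P1 →ₗ[R] R) :=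
    { toFun := fun a => a ∘ₗ d1, map_add' := fun _ _ => rfl, map_smul' := fun _ _ => rfl }
  let D2 : (P1 →ₗ[R] R) →ₗ[Rᵐᵒᵖ] (P2 →ₗ[R] R) :=
    { toFun := fun a => a ∘ₗ d2, map_add' := fun _ _ => rfl, map_smul' := fun _ _ => rfl }
  let th : ∀ (P : Type u) [AddCommGroup P] [Module R P], P → E → ((P →ₗ[R] R) →ₗ[Rᵐᵒᵖ] E) :=
    fun P _ _ x y =>
    { toFun := fun a => MulOpposite.op (a x) • y
      map_add' := fun a b => by simp [add_smul]
      map_smul' := fun r a => by simp [mul_smul] }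
  have hsm : ∀ (r : R) (k : CharGroup E) (y : E),
    CharGroup.toHom (r • k) y = CharGroup.toHom k (MulOpposite.op r • y) := fun _ _ _ => rfl
  have hsum : ∀ {N : ℕ} (k : Fin N → CharGroup E) (y : E),
      CharGroup.toHom (∑ i, k i) y = ∑ i, CharGroup.toHom (k i) y := fun k y =>
    AddMonoidHom.finsetSum_apply (M := E) (N := AddCircle (1 : ℚ)) k Finset.univ y
  let lam : ((P1 →ₗ[R] R) →ₗ[Rᵐᵒᵖ] E) →+ AddCircle (1 : ℚ) :=
    AddMonoidHom.mk' (fun t => ∑ i, CharGroup.toHom (f (p i)) (t (c i))) (fun s t => by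
      simp [Finset.sum_add_distrib])
  have hlam : ∀ t, lam t = ∑ i, CharGroup.toHom (f (p i)) (t (c i)) := fun _ => rfl
  let res : ((P1 →ₗ[R] R) →ₗ[Rᵐᵒᵖ] E) →ₗ[ℤ] ((P0 →ₗ[R] R) →ₗ[Rᵐᵒᵖ] E) :=
    (AddMonoidHom.mk' (fun t => t ∘ₗ D1) (fun s t => rfl)).toIntLinearMap
  obtain ⟨mu, hmu⟩ := char_extend res lam (by
    intro t ht
    have ht' : ∀ a, t (a ∘ₗ d1) = 0 := fun a => DFunLike.congr_fun (f := t ∘ₗ D1) ht a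
    obtain ⟨t', rfl⟩ := inj_extend hE D2 t (fun a ha => by
      obtain ⟨b, rfl⟩ := hR a ha
      exact ht' b)
    have h1 : ∀ i, D2 (c i) = ∑ j, MulOpposite.op (c i (d2 (q j))) • e j := fun i => by
      ext x
      change c i (d2 x) = _
      conv_lhs => rw [← hqe x]
      simp
    rw [hlam]
    calc _ = ∑ i, ∑ j, CharGroup.toHom (c i (d2 (q j)) • f (p i)) (t' (e j)) := by
            refine Finset.sum_congr rfl fun i _ => ?_
            rw [LinearMap.comp_apply, h1, map_sum, map_sum]
            refine Finset.sum_congr rfl fun j _ => ?_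
            rw [hsm, map_smul]
      _ = ∑ j, CharGroup.toHom (f (d2 (q j))) (t' (e j)) := by
            rw [Finset.sum_comm]
            refine Finset.sum_congr rfl fun j _ => ?_
            rw [← hsum]
            conv_rhs => rw [← hpc (d2 (q j))]
            simp only [map_sum, map_smul]
      _ = 0 := by
            refine Finset.sum_eq_zero fun j _ => ?_
            have : f (d2 (q j)) = 0 := DFunLike.congr_fun hf (q j)
            rw [this]; rfl)
  refine ⟨{ toFun := fun x => CharGroup.ofHom (AddMonoidHom.mk' (fun y => mu (th P0 x y)) ?_)
            map_add' := ?_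
            map_smul' := ?_ }, ?_⟩
  · intro y z
    rw [← map_add]
    congr 1
    ext a
    exact smul_add _ _ _
  · intro x x'
    refine CharGroup.hom_ext fun y => ?_
    change mu _ = mu _ + mu _
    rw [← map_add]
    congr 1
    ext a
    change MulOpposite.op (a (x + x')) • y = MulOpposite.op (a x) • y + MulOpposite.op (a x') • y
    rw [map_add, MulOpposite.op_add, add_smul]
  · intro r x
    refine CharGroup.hom_ext fun y => ?_
    change mu _ = mu _
    congr 1
    ext a
    change MulOpposite.op (a (r • x)) • y = MulOpposite.op (a x) • MulOpposite.op r • y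
    rw [map_smul, smul_eq_mul, MulOpposite.op_mul, mul_smul]
  · ext x
    refine CharGroup.hom_ext fun y => ?_
    change mu (th P0 (d1 x) y) = _
    have : th P0 (d1 x) y = res (th P1 x y) := rfl
    rw [this, hmu, hlam]
    conv_rhs => rw [← hpc x]
    simp only [map_sum, map_smul, hsum]
    rfl

theorem nwfd_injective {R : Type u} [Ring R] {n k : ℕ}
    (h : nwidLE R n k (ModuleCat.of R R)) (E : ModuleCat.{u} Rᵐᵒᵖ)
    (hE : Module.Injective Rᵐᵒᵖ E) : nwfdLE R n k E := by
  intro K hK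
  have hR := h K hK
  have hres : ∃ (F : ℕ → ModuleCat.{u} R) (d : ∀ i, F (i + 1) →ₗ[R] F i) (p : F 0 →ₗ[R] K),
      (∀ i, Module.Projective R (F i)) ∧ (∀ i, Module.Finite R (F i)) ∧
      Function.Surjective p ∧ Function.Exact (d 0) p ∧
      (∀ i, Function.Exact (d (i + 1)) (d i)) := by
    obtain ⟨U, F, d, p, hP, hF, hp, h0, hd, hK⟩ := hK
    cases n with
    | zero =>
      obtain ⟨e⟩ : Nonempty ((K : Type u) ≃ₗ[R] U) := by simpa using hK
      exact ⟨F, d, e.symm.toLinearMap ∘ₗ p, hP, fun i => hF i (Nat.zero_le _),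
        e.symm.surjective.comp hp, fun x => by simpa using h0 x, hd⟩
    | succ m =>
      obtain ⟨e⟩ : Nonempty ((K : Type u) ≃ₗ[R] LinearMap.range (d m)) := by simpa using hK
      refine ⟨fun i => F (m + 1 + i), fun i => d (m + 1 + i),
        e.symm.toLinearMap ∘ₗ (d m).rangeRestrict, fun i => hP _,
        fun i => hF _ (Nat.le_add_right _ _),
        e.symm.surjective.comp (d m).surjective_rangeRestrict, fun x => ?_,
        fun i => hd (m + 1 + i)⟩
      refine Iff.trans ?_ (hd m x)
      simp [← Subtype.coe_inj]
  obtain ⟨F, d, p, hP, hF, hp, h0, hd⟩ := hres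
  rw [extVanish_iff' K F d p hP hp h0 hd] at hR
  unfold torVanish
  rw [extVanish_iff' K F d p hP hp h0 hd]
  intro f hf
  have := hP (k + 1)
  have := hP (k + 2)
  have := hF (k + 1)
  have := hF (k + 2)
  exact key (d (k + 1)) (d k) hR E hE f hf

theorem desc_of_exact {S : Type u} [Ring S] {A B C X : Type u} [AddCommGroup A] [AddCommGroup B]
    [AddCommGroup C] [AddCommGroup X] [Module S A] [Module S B] [Module S C] [Module S X]
    (d : A →ₗ[S] B) (p : B →ₗ[S] C) (hp : Function.Surjective p) (he : Function.Exact d p)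
    (a : B →ₗ[S] X) (ha : a ∘ₗ d = 0) : ∃ g : C →ₗ[S] X, g ∘ₗ p = a := by
  have hle : LinearMap.ker p ≤ LinearMap.ker a := fun x hx => by
    obtain ⟨y, rfl⟩ := (he x).1 hx
    exact DFunLike.congr_fun ha y
  refine ⟨(LinearMap.ker p).liftQ a hle ∘ₗ (p.quotKerEquivOfSurjective hp).symm.toLinearMap, ?_⟩
  ext x
  have : (p.quotKerEquivOfSurjective hp).symm (p x) = Submodule.Quotient.mk x := by
    rw [LinearEquiv.symm_apply_eq]; rfl
  simp [this]

end Helpers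

/-- if `n-wid(_R R) ≤ k`, then `M` is `(n,k)`-weak cotorsion iff `M` is
the kernel of a `WF^n_k(R^op)`-precover `φ : E → D` with `E` injective. -/
theorem stmt9 (R : Type u) [Ring R] (n k : ℕ)
    (h : nwidLE R n k (ModuleCat.of R R)) (M : ModuleCat.{u} Rᵐᵒᵖ) :
    IsNKWeakCotorsion R n k M ↔
      ∃ (E D : ModuleCat.{u} Rᵐᵒᵖ) (φ : E →ₗ[Rᵐᵒᵖ] D),
        Module.Injective Rᵐᵒᵖ E ∧ IsPrecover Rᵐᵒᵖ (nwfdLE R n k) E D φ ∧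
        Nonempty ((M : Type u) ≃ₗ[Rᵐᵒᵖ] LinearMap.ker φ) := by
  constructor
  · intro hM
    let E := Injective.under M
    let ι : M →ₗ[Rᵐᵒᵖ] E := (Injective.ι M).hom
    have hι : Function.Injective ι := (ModuleCat.mono_iff_injective (Injective.ι M)).1 inferInstance
    have hE : Module.Injective Rᵐᵒᵖ E :=
      (Module.injective_iff_injective_object Rᵐᵒᵖ E).2 (Injective.injective_under M)
    refine ⟨E, ModuleCat.of Rᵐᵒᵖ (E ⧸ LinearMap.range ι), (LinearMap.range ι).mkQ, hE,
      ⟨nwfd_injective h E hE, fun F hF g => ?_⟩, ?_⟩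
    · obtain ⟨P0, P1, P2, d1, d2, p, hP0, hp, he0, he1, hext⟩ := exists_pres F
      have hx := (hext M).1 (hM F hF)
      obtain ⟨a, ha⟩ := Module.projective_lifting_property (LinearMap.range ι).mkQ (g ∘ₗ p)
        (Submodule.mkQ_surjective _)
      have hmem : ∀ x, a (d1 x) ∈ LinearMap.range ι := fun x => by
        have h1 := DFunLike.congr_fun ha (d1 x)
        rw [LinearMap.comp_apply, LinearMap.comp_apply, he0.apply_apply_eq_zero, map_zero] at h1
        exact (Submodule.Quotient.mk_eq_zero _).1 h1
      let e := LinearEquiv.ofInjective ι hι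
      let f : P1 →ₗ[Rᵐᵒᵖ] M := e.symm.toLinearMap ∘ₗ (a ∘ₗ d1).codRestrict _ hmem
      have hf : ∀ x, ι (f x) = a (d1 x) := fun x => by
        have : e (f x) = (a ∘ₗ d1).codRestrict _ hmem x := e.apply_symm_apply _
        exact congrArg Subtype.val this
      obtain ⟨b, hb⟩ := hx f (LinearMap.ext fun x => hι (by
        rw [LinearMap.comp_apply, hf, he1.apply_apply_eq_zero]; simp))
      obtain ⟨s, hs⟩ := desc_of_exact d1 p hp he0 (a - ι ∘ₗ b) (LinearMap.ext fun x => by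
        have : b (d1 x) = f x := DFunLike.congr_fun hb x
        simp [this, hf])
      refine ⟨s, LinearMap.ext fun y => ?_⟩
      obtain ⟨x, rfl⟩ := hp y
      have h1 : s (p x) = a x - ι (b x) := DFunLike.congr_fun hs x
      have h2 : (LinearMap.range ι).mkQ (a x) = g (p x) := DFunLike.congr_fun ha x
      have h3 : (LinearMap.range ι).mkQ (ι (b x)) = 0 :=
        (Submodule.Quotient.mk_eq_zero _).2 ⟨_, rfl⟩
      rw [LinearMap.comp_apply, h1, map_sub, h2, h3, sub_zero]
    · refine ⟨(LinearEquiv.ofInjective ι hι).trans (LinearEquiv.ofEq _ _ ?_)⟩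
      exact (Submodule.ker_mkQ _).symm
  · rintro ⟨E, D, φ, hE, ⟨-, hpre⟩, ⟨e⟩⟩ N hN
    obtain ⟨P0, P1, P2, d1, d2, p, hP0, hp, he0, he1, hext⟩ := exists_pres N
    rw [hext]
    intro f hf
    let ι : M →ₗ[Rᵐᵒᵖ] E := (LinearMap.ker φ).subtype ∘ₗ e.toLinearMap
    have hι : Function.Injective ι := (Submodule.injective_subtype _).comp e.injective
    have hφι : ∀ x, φ (ι x) = 0 := fun x => (e x).2
    obtain ⟨a, ha⟩ := inj_extend hE d1 (ι ∘ₗ f) (fun x hx => by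
      obtain ⟨y, rfl⟩ := (he1 x).1 hx
      have : f (d2 y) = 0 := DFunLike.congr_fun hf y
      rw [LinearMap.comp_apply, this, map_zero])
    have ha' : ∀ x, a (d1 x) = ι (f x) := fun x => DFunLike.congr_fun ha x
    obtain ⟨g, hg⟩ := desc_of_exact d1 p hp he0 (φ ∘ₗ a) (LinearMap.ext fun x => by
      simp [ha', hφι])
    obtain ⟨s, hs⟩ := hpre N hN g
    have hmem : ∀ x, (a - s ∘ₗ p) x ∈ LinearMap.ker φ := fun x => by
      have h1 : g (p x) = φ (a x) := DFunLike.congr_fun hg x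
      have h2 : φ (s (p x)) = g (p x) := DFunLike.congr_fun hs (p x)
      simp [h1, h2]
    refine ⟨e.symm.toLinearMap ∘ₗ (a - s ∘ₗ p).codRestrict _ hmem, LinearMap.ext fun x => hι ?_⟩
    have h3 : ∀ y, ι ((e.symm.toLinearMap ∘ₗ (a - s ∘ₗ p).codRestrict _ hmem) y) =
        (a - s ∘ₗ p) y := fun y => congrArg Subtype.val
          (e.apply_symm_apply ((a - s ∘ₗ p).codRestrict _ hmem y))
    refine (h3 (d1 x)).trans ?_
    simp [ha', he0.apply_apply_eq_zero]
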